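/- No connected 3-regular (cubic) simple graph on at most 12 vertices contains a Šoltés vertex; that is, for every connected cubic graph G with |V(G)| ≤ 12 and every vertex v of G, either G − v is disconnected or W(G − v) ≠ W(G). -/

import Mathlib

open SimpleGraph Finset

/-- A `Fintype` instance for the vertex set of a vertex-deleted subgraph. -/
noncomputable instance instFintypeNe {V : Type*} [Fintype V] (v : V) :
    Fintype {u : V // u ≠ v} :=
  (Set.toFinite {u : V | u ≠ v}).fintype

/-- The graph obtained from `G` by deleting the vertex `v` (an induced subgraph). -/
def deleteVertex {V : Type*} (G : SimpleGraph V) (v : V) :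
    SimpleGraph {u : V // u ≠ v} :=
  G.induce {u : V | u ≠ v}

/-- The Wiener index of a finite simple graph: the sum of distances over all
unordered pairs of vertices. -/
noncomputable def wiener {V : Type*} [Fintype V] (G : SimpleGraph V) : ℕ :=
  (∑ u : V, ∑ v : V, G.dist u v) / 2

/-- `v` is a Šoltés vertex of `G` if `G - v` is connected and has the same Wiener index. -/
def IsSoltes {V : Type*} [Fintype V] (G : SimpleGraph V) (v : V) : Prop :=
  (deleteVertex G v).Connected ∧ wiener (deleteVertex G v) = wiener G

/-- A graph is cubic (3-regular) if every vertex has exactly 3 neighbours. -/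
def IsCubic {V : Type*} (G : SimpleGraph V) : Prop :=
  ∀ v : V, (G.neighborSet v).ncard = 3

/-- A finite graph is 2-connected if it is connected, has at least 3 vertices,
and stays connected after deleting any one vertex. -/
def TwoConnected {V : Type*} [Fintype V] (G : SimpleGraph V) : Prop :=
  G.Connected ∧ 3 ≤ Fintype.card V ∧ ∀ v : V, (deleteVertex G v).Connected

namespace SoltesSearch

/-- One step of ball growing. -/
def grow (A B : ℕ) : ℕ :=
  Nat.lor (Nat.lor (Nat.lor (Nat.lor (Nat.lor (Nat.lor (Nat.lor (Nat.lor (Nat.lor (Nat.lor (Nat.lor (Nat.lor (B)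
    (Nat.mul (Nat.land (Nat.shiftRight A 0) 5445847423328601499764522166702896582657)
      (Nat.land (Nat.shiftRight B 0) 4095)))
    (Nat.mul (Nat.land (Nat.shiftRight A 1) 5445847423328601499764522166702896582657)
      (Nat.land (Nat.shiftRight B 12) 4095)))
    (Nat.mul (Nat.land (Nat.shiftRight A 2) 5445847423328601499764522166702896582657)
      (Nat.land (Nat.shiftRight B 24) 4095)))
    (Nat.mul (Nat.land (Nat.shiftRight A 3) 5445847423328601499764522166702896582657)
      (Nat.land (Nat.shiftRight B 36) 4095)))
    (Nat.mul (Nat.land (Nat.shiftRight A 4) 5445847423328601499764522166702896582657)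
      (Nat.land (Nat.shiftRight B 48) 4095)))
    (Nat.mul (Nat.land (Nat.shiftRight A 5) 5445847423328601499764522166702896582657)
      (Nat.land (Nat.shiftRight B 60) 4095)))
    (Nat.mul (Nat.land (Nat.shiftRight A 6) 5445847423328601499764522166702896582657)
      (Nat.land (Nat.shiftRight B 72) 4095)))
    (Nat.mul (Nat.land (Nat.shiftRight A 7) 5445847423328601499764522166702896582657)
      (Nat.land (Nat.shiftRight B 84) 4095)))
    (Nat.mul (Nat.land (Nat.shiftRight A 8) 5445847423328601499764522166702896582657)
      (Nat.land (Nat.shiftRight B 96) 4095)))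
    (Nat.mul (Nat.land (Nat.shiftRight A 9) 5445847423328601499764522166702896582657)
      (Nat.land (Nat.shiftRight B 108) 4095)))
    (Nat.mul (Nat.land (Nat.shiftRight A 10) 5445847423328601499764522166702896582657)
      (Nat.land (Nat.shiftRight B 120) 4095)))
    (Nat.mul (Nat.land (Nat.shiftRight A 11) 5445847423328601499764522166702896582657)
      (Nat.land (Nat.shiftRight B 132) 4095))

/-- Number of ones in a packed matrix. -/
def count (B : ℕ) : ℕ :=
  Nat.mod (
    Nat.add (Nat.add (Nat.add (Nat.add (Nat.add (Nat.add (Nat.add (Nat.add (Nat.add (Nat.add (Nat.add (Nat.add (0)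
    (Nat.land (Nat.shiftRight B 0) 5445847423328601499764522166702896582657))
    (Nat.land (Nat.shiftRight B 1) 5445847423328601499764522166702896582657))
    (Nat.land (Nat.shiftRight B 2) 5445847423328601499764522166702896582657))
    (Nat.land (Nat.shiftRight B 3) 5445847423328601499764522166702896582657))
    (Nat.land (Nat.shiftRight B 4) 5445847423328601499764522166702896582657))
    (Nat.land (Nat.shiftRight B 5) 5445847423328601499764522166702896582657))
    (Nat.land (Nat.shiftRight B 6) 5445847423328601499764522166702896582657))
    (Nat.land (Nat.shiftRight B 7) 5445847423328601499764522166702896582657))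
    (Nat.land (Nat.shiftRight B 8) 5445847423328601499764522166702896582657))
    (Nat.land (Nat.shiftRight B 9) 5445847423328601499764522166702896582657))
    (Nat.land (Nat.shiftRight B 10) 5445847423328601499764522166702896582657))
    (Nat.land (Nat.shiftRight B 11) 5445847423328601499764522166702896582657)) 4095

/-- Sum of the number of pairs not yet reached, over the next `f` levels. -/
noncomputable def value (A N f : ℕ) : ℕ → ℕ :=
  Nat.rec (motive := fun _ => ℕ → ℕ) (fun _ => 0)
    (fun _ ih B => Nat.rec (motive := fun _ => ℕ) 0
      (fun c _ => Nat.add (Nat.succ c)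
        (Nat.rec (motive := fun _ => ℕ) (ih 0) (fun k _ => ih k) (Nat.succ (grow A B))))
      (Nat.sub N (count B))) f

/-- Diagonal entries `lo ≤ i < lo + d`. -/
noncomputable def diag (lo d : ℕ) : ℕ :=
  Nat.rec (motive := fun _ => ℕ) 0
    (fun j ih => Nat.lor ih (Nat.shiftLeft 1 (Nat.mul 13 (Nat.add lo j)))) d

/-- Call `g` on an evaluated argument. -/
noncomputable def call {α : Type} (g : ℕ → α) (x : ℕ) : α :=
  Nat.rec (motive := fun _ => α) (g 0) (fun k _ => g k) (Nat.succ x)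

/-- Test at a completed graph. -/
noncomputable def leaf (n S : ℕ) : Bool :=
  not (Nat.beq
    (Nat.div (call (fun N => call (value S N 11) (diag 0 n)) (Nat.mul n n)) 2)
    (Nat.div (call (fun A => call (fun N => call (value A N 11) (diag 1 (Nat.sub n 1)))
      (Nat.mul (Nat.sub n 1) (Nat.sub n 1)))
      (Nat.land S 22295299351107294540035953750481658609393664)) 2))

/-- `0` exactly if row `u` of the packed matrix `S` has at most two ones. -/
noncomputable def full (S u : ℕ) : ℕ :=
  Nat.rec (motive := fun _ => ℕ) 0 (fun k _ =>
    Nat.rec (motive := fun _ => ℕ) 0 (fun k _ => Nat.land (Nat.succ k) k)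
      (Nat.land (Nat.succ k) k))
  (Nat.land (Nat.shiftRight S (Nat.mul 12 u)) 4095)

/-- Add the edge `u w`. -/
def addEdge (u w S : ℕ) : ℕ :=
  Nat.lor S (Nat.lor (Nat.shiftLeft 1 (Nat.add (Nat.mul 12 u) w))
    (Nat.shiftLeft 1 (Nat.add (Nat.mul 12 w) u)))

/-- Row `u` is complete. -/
noncomputable def next (n u S : ℕ) (ih : ℕ → ℕ → ℕ → Bool) : Bool :=
  Bool.rec (motive := fun _ => Bool)
    (Nat.rec (motive := fun _ => Bool) true
      (fun _ _ => call (fun u' => call (fun w' => ih u' w' S) (Nat.succ u')) (Nat.succ u))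
      (Nat.shiftRight S (Nat.mul 12 (Nat.succ u))))
    (leaf n S)
    (Nat.beq (Nat.succ u) n)

/-- May the pair `u w` be an edge? -/
noncomputable def allowed (u w S : ℕ) : Bool :=
  Nat.rec (motive := fun _ => Bool)
    (Bool.rec (motive := fun _ => Bool)
      (not (Nat.beq (Nat.land (Nat.shiftRight S (Nat.mul 12 w)) 4095)
         (Nat.land (Nat.shiftRight S (Nat.mul 12 (Nat.pred w))) 4095)))
      true
      (Nat.beq w (Nat.succ u)))
    (fun _ _ => false) (full S w)

/-- The exhaustive search. -/
noncomputable def go (n f : ℕ) : ℕ → ℕ → ℕ → Bool :=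
  Nat.rec (motive := fun _ => ℕ → ℕ → ℕ → Bool) (fun _ _ _ => false)
    (fun _ ih u w S =>
      Nat.rec (motive := fun _ => Bool)
        (Bool.rec (motive := fun _ => Bool)
          (call (fun w' =>
            Bool.rec (motive := fun _ => Bool) false
              (Bool.rec (motive := fun _ => Bool) true
                (call (ih u w') (addEdge u w S)) (allowed u w S))
              (ih u w' S)) (Nat.succ w))
          true
          (Nat.beq w n))
        (fun _ _ => next n u S ih)
        (full S u)) f

end SoltesSearch

namespace SoltesSearch

/-! ### Bits -/

theorem testBit_row (S u j : ℕ) :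
    (Nat.land (Nat.shiftRight S (Nat.mul 12 u)) 4095).testBit j = true ↔
      j < 12 ∧ S.testBit (12 * u + j) = true := by
  change ((S >>> (12 * u)) &&& (2 ^ 12 - 1)).testBit j = true ↔ _
  rw [Nat.testBit_and, Nat.testBit_shiftRight, Nat.testBit_two_pow_sub_one]
  simp [and_comm]

theorem low_sub {r i : ℕ} (h : (r &&& (r - 1)).testBit i = true) : r.testBit i = true := by
  rw [Nat.testBit_and] at h
  simp at h
  exact h.1

theorem low_drop {r : ℕ} (h : r ≠ 0) :
    ∃ i, r.testBit i = true ∧ ¬ (r &&& (r - 1)).testBit i = true := by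
  by_contra hc
  push Not at hc
  have h1 : r &&& (r - 1) = r := by
    apply Nat.eq_of_testBit_eq
    intro i
    by_cases hi : r.testBit i = true
    · rw [hc i hi, hi]
    · have : ¬ (r &&& (r - 1)).testBit i = true := fun h => hi (low_sub h)
      simp only [Bool.not_eq_true] at hi this
      rw [hi, this]
  have h2 : r &&& (r - 1) ≤ r - 1 := Nat.and_le_right
  omega

theorem low_keep {r a b : ℕ} (hab : a < b) (ha : r.testBit a = true) (hb : r.testBit b = true) :
    (r &&& (r - 1)).testBit b = true := by
  rw [Nat.testBit_and, hb, Bool.true_and]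
  have h1 : (r % 2 ^ b).testBit a = true := by
    rw [Nat.testBit_mod_two_pow]; simp [hab, ha]
  have h2 : r % 2 ^ b ≠ 0 := by
    intro h; rw [h] at h1; simp at h1
  have h3 : (r - 1) / 2 ^ b = r / 2 ^ b := by
    have hlt : r % 2 ^ b < 2 ^ b := Nat.mod_lt _ (by positivity)
    have he := Nat.div_add_mod r (2 ^ b)
    rw [Nat.div_eq_iff (by positivity)]
    have hc : 2 ^ b * (r / 2 ^ b) = r / 2 ^ b * 2 ^ b := Nat.mul_comm _ _
    omega
  rw [Nat.testBit_eq_decide_div_mod_eq] at hb ⊢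
  rw [h3]; exact hb

theorem full_eq (S u : ℕ) :
    full S u = (let r := Nat.land (Nat.shiftRight S (Nat.mul 12 u)) 4095
      let q := r &&& (r - 1)
      q &&& (q - 1)) := by
  unfold full
  generalize Nat.land (Nat.shiftRight S (Nat.mul 12 u)) 4095 = r
  cases r with
  | zero => rfl
  | succ k =>
    change Nat.rec (motive := fun _ => ℕ) 0 (fun k _ => Nat.land (Nat.succ k) k)
      ((k + 1) &&& k) = (((k + 1) &&& k) &&& (((k + 1) &&& k) - 1))
    generalize (k + 1) &&& k = q
    cases q with
    | zero => rfl
    | succ k => rfl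

theorem full_ne {S u : ℕ} (h : full S u ≠ 0) :
    ∃ x y z, x ≠ y ∧ x ≠ z ∧ y ≠ z ∧ (∀ j, j = x ∨ j = y ∨ j = z →
      j < 12 ∧ S.testBit (12 * u + j) = true) := by
  rw [full_eq] at h
  simp only [] at h
  have hr := fun j => testBit_row S u j
  generalize Nat.land (Nat.shiftRight S (Nat.mul 12 u)) 4095 = r at h hr
  have hr0 : r ≠ 0 := by rintro rfl; simp at h
  have hq0 : r &&& (r - 1) ≠ 0 := by intro hq; rw [hq] at h; simp at h
  obtain ⟨x, hx, hx'⟩ := low_drop hr0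
  obtain ⟨y, hy, hy'⟩ := low_drop hq0
  obtain ⟨z, hz, -⟩ := low_drop h
  have hz1 := low_sub hz
  refine ⟨x, y, z, ?_, ?_, ?_, ?_⟩
  · rintro rfl; exact hx' hy
  · rintro rfl; exact hx' hz1
  · rintro rfl; exact hy' hz
  · rintro j (rfl | rfl | rfl)
    · exact (hr _).1 hx
    · exact (hr _).1 (low_sub hy)
    · exact (hr _).1 (low_sub hz1)

theorem ne_full {S u x y z : ℕ} (hxy : x ≠ y) (hxz : x ≠ z) (hyz : y ≠ z)
    (hx : x < 12 ∧ S.testBit (12 * u + x) = true)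
    (hy : y < 12 ∧ S.testBit (12 * u + y) = true)
    (hz : z < 12 ∧ S.testBit (12 * u + z) = true) : full S u ≠ 0 := by
  rw [full_eq]
  simp only []
  have hr := fun j => testBit_row S u j
  rw [← hr] at hx hy hz
  generalize Nat.land (Nat.shiftRight S (Nat.mul 12 u)) 4095 = r at hx hy hz
  have key : ∀ a b c : ℕ, a < b → b < c → r.testBit a = true → r.testBit b = true →
      r.testBit c = true → (r &&& (r - 1)) &&& ((r &&& (r - 1)) - 1) ≠ 0 := by
    intro a b c hab hbc ha hb hc h0
    have h := low_keep hbc (low_keep hab ha hb) (low_keep (hab.trans hbc) ha hc)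
    rw [h0] at h
    simp at h
  rcases lt_or_gt_of_ne hxy with h1 | h1 <;> rcases lt_or_gt_of_ne hxz with h2 | h2 <;>
    rcases lt_or_gt_of_ne hyz with h3 | h3
  · exact key x y z h1 h3 hx hy hz
  · exact key x z y h2 h3 hx hz hy
  · omega
  · exact key z x y h2 h1 hz hx hy
  · exact key y x z h1 h2 hy hx hz
  · omega
  · exact key y z x h3 h2 hy hz hx
  · exact key z y x h3 h1 hz hy hx

theorem pos_inj {i j k l : ℕ} (hj : j < 12) (hl : l < 12) : 12 * i + j = 12 * k + l ↔ i = k ∧ j = l := by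
  omega

theorem testBit_addEdge {u w S i j : ℕ} (hu : u < 12) (hw : w < 12) (hj : j < 12) :
    (addEdge u w S).testBit (12 * i + j) = true ↔
      S.testBit (12 * i + j) = true ∨ (i = u ∧ j = w) ∨ (i = w ∧ j = u) := by
  change (S ||| (1 <<< (12 * u + w) ||| 1 <<< (12 * w + u))).testBit (12 * i + j) = true ↔ _
  rw [Nat.one_shiftLeft, Nat.one_shiftLeft, Nat.testBit_or, Nat.testBit_or,
    Nat.testBit_two_pow, Nat.testBit_two_pow]
  simp only [Bool.or_eq_true, decide_eq_true_eq, pos_inj hw hj, pos_inj hu hj]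
  tauto

/-! ### The search -/

/-- What we know about the adjacency relation of a suitably labelled counterexample. -/
structure Good (n : ℕ) (a : ℕ → ℕ → Prop) : Prop where
  symm : ∀ i j, a i j → a j i
  irrefl : ∀ i, ¬ a i i
  lt : ∀ i j, a i j → i < n
  cubic : ∀ u, u < n → ∃ x y z, x ≠ y ∧ x ≠ z ∧ y ≠ z ∧ ∀ j, a u j ↔ j = x ∨ j = y ∨ j = z
  conn : ∀ u, 0 < u → u < n → ∃ i j, i < u ∧ u ≤ j ∧ a i j
  twin : ∀ u x w, u < x → x < w → w < n → (∀ i, i < u → (a i x ↔ a i w)) → a u w → a u x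

/-- The pair `i j` has been decided. -/
def Dec (u w i j : ℕ) : Prop := i < u ∨ j < u ∨ (i = u ∧ j < w) ∨ (j = u ∧ i < w)

theorem go_zero (n u w S : ℕ) : go n 0 u w S = false := rfl

theorem go_succ (n f u w S : ℕ) : go n (f + 1) u w S =
    if full S u = 0 then
      if w = n then true else go n f u (w + 1) S &&
        (!allowed u w S || go n f u (w + 1) (addEdge u w S))
    else if u + 1 = n then leaf n S
      else if Nat.shiftRight S (Nat.mul 12 (u + 1)) = 0 then true
      else go n f (u + 1) (u + 2) S := by
  have h1 : go n (f + 1) u w S = Nat.rec (motive := fun _ => Bool)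
        (Bool.rec (motive := fun _ => Bool)
            (Bool.rec (motive := fun _ => Bool) false
              (Bool.rec (motive := fun _ => Bool) true
                (go n f u (w + 1) (addEdge u w S)) (allowed u w S))
              (go n f u (w + 1) S))
          true
          (Nat.beq w n))
        (fun _ _ => Bool.rec (motive := fun _ => Bool)
          (Nat.rec (motive := fun _ => Bool) true
            (fun _ _ => go n f (u + 1) (u + 2) S)
            (Nat.shiftRight S (Nat.mul 12 (Nat.succ u))))
          (leaf n S)
          (Nat.beq (Nat.succ u) n))
        (full S u) := rfl
  rw [h1]
  generalize go n f u (w + 1) (addEdge u w S) = g1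
  generalize go n f u (w + 1) S = g2
  generalize go n f (u + 1) (u + 2) S = g3
  generalize leaf n S = g4
  generalize allowed u w S = b
  change _ = if full S u = 0 then _ else if u.succ = n then _
    else if Nat.shiftRight S (Nat.mul 12 u.succ) = 0 then _ else _
  generalize Nat.shiftRight S (Nat.mul 12 u.succ) = q
  generalize full S u = p
  cases p with
  | zero =>
    by_cases hw : w = n
    · subst hw; simp
    · have : Nat.beq w n = false := by
        rw [← Bool.not_eq_true, Nat.beq_eq]; exact hw
      rw [this]
      cases b <;> cases g1 <;> cases g2 <;> simp [hw]
  | succ p =>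
    by_cases hw : u.succ = n
    · subst hw; simp
    · have : Nat.beq u.succ n = false := by
        rw [← Bool.not_eq_true, Nat.beq_eq]; exact hw
      rw [this]
      cases q <;> simp [hw]

theorem allowed_eq (u w S : ℕ) : allowed u w S = true ↔ full S w = 0 ∧ (w = u + 1 ∨
    Nat.land (Nat.shiftRight S (Nat.mul 12 w)) 4095 ≠
      Nat.land (Nat.shiftRight S (Nat.mul 12 (w - 1))) 4095) := by
  unfold allowed
  cases full S w with
  | succ k => simp
  | zero =>
    change (Bool.rec (motive := fun _ => Bool)
      (not (Nat.beq (Nat.land (Nat.shiftRight S (Nat.mul 12 w)) 4095)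
         (Nat.land (Nat.shiftRight S (Nat.mul 12 (w - 1))) 4095)))
      true (Nat.beq w (Nat.succ u))) = true ↔ _
    generalize Nat.land (Nat.shiftRight S (Nat.mul 12 w)) 4095 = p
    generalize Nat.land (Nat.shiftRight S (Nat.mul 12 (w - 1))) 4095 = q
    by_cases hw : w = u + 1
    · subst hw; simp
    · have : Nat.beq w u.succ = false := by
        rw [← Bool.not_eq_true, Nat.beq_eq]; exact hw
      rw [this]
      simp [hw, ← Bool.not_eq_true]

theorem go_sound {n : ℕ} (hn : n ≤ 12) {a : ℕ → ℕ → Prop} (ha : Good n a)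
    (hleaf : ∀ S : ℕ, (∀ i j, i < 12 → j < 12 → (S.testBit (12 * i + j) = true ↔ a i j)) →
      leaf n S = false) :
    ∀ f u w S, u < n → u < w → w ≤ n →
      (∀ i j, i < 12 → j < 12 → (S.testBit (12 * i + j) = true ↔ a i j ∧ Dec u w i j)) →
      go n f u w S = false := by
  intro f
  induction f with
  | zero => intros; rfl
  | succ f ih =>
    intro u w S hu huw hwn hS
    have hlt2 : ∀ i j, a i j → j < n := fun i j h => ha.lt _ _ (ha.symm _ _ h)
    rw [go_succ]
    split_ifs with h1 h2 h3 h4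
    · -- row `u` ended with too few neighbours
      exfalso
      obtain ⟨x, y, z, hxy, hxz, hyz, hc⟩ := ha.cubic u hu
      have key : ∀ j, a u j → j < 12 ∧ S.testBit (12 * u + j) = true := by
        intro j hj
        have := hlt2 _ _ hj
        refine ⟨by omega, (hS u j (by omega) (by omega)).2 ⟨hj, ?_⟩⟩
        unfold Dec; omega
      exact ne_full hxy hxz hyz (key x ((hc x).2 (by simp))) (key y ((hc y).2 (by simp)))
        (key z ((hc z).2 (by simp))) h1
    · -- branch on the pair `u w`
      have hw : w < n := lt_of_le_of_ne hwn h2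
      by_cases haw : a u w
      · have hadd : go n f u (w + 1) (addEdge u w S) = false := by
          apply ih u (w + 1) _ hu (by omega) (by omega)
          intro i j hi hj
          rw [testBit_addEdge (by omega) (by omega) hj, hS i j hi hj]
          have := ha.symm _ _ haw
          unfold Dec
          constructor
          · rintro (⟨h, h'⟩ | ⟨rfl, rfl⟩ | ⟨rfl, rfl⟩)
            · exact ⟨h, by omega⟩
            · exact ⟨haw, by omega⟩
            · exact ⟨this, by omega⟩
          · rintro ⟨h, h'⟩
            by_cases hd : i < u ∨ j < u ∨ (i = u ∧ j < w) ∨ (j = u ∧ i < w)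
            · exact Or.inl ⟨h, hd⟩
            · right; omega
        have hall : allowed u w S = true := by
          rw [allowed_eq]
          constructor
          · by_contra hne
            obtain ⟨x, y, z, hxy, hxz, hyz, hc⟩ := full_ne hne
            obtain ⟨x', y', z', hxy', hxz', hyz', hc'⟩ := ha.cubic w hw
            have key : ∀ j, j = x ∨ j = y ∨ j = z → (j = x' ∨ j = y' ∨ j = z') ∧ j ≠ u := by
              intro j hj
              obtain ⟨hj12, hb⟩ := hc j hj
              obtain ⟨h, hd⟩ := (hS w j (by omega) hj12).1 hb
              refine ⟨(hc' j).1 h, ?_⟩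
              rintro rfl
              unfold Dec at hd
              omega
            have k0 := (hc' u).1 (ha.symm _ _ haw)
            have k1 := key x (by simp)
            have k2 := key y (by simp)
            have k3 := key z (by simp)
            omega
          · by_contra hne
            push Not at hne
            obtain ⟨hne1, hrow⟩ := hne
            have hbits : ∀ i, i < 12 → (S.testBit (12 * w + i) = true ↔
                S.testBit (12 * (w - 1) + i) = true) := by
              intro i hi
              have e1 := testBit_row S w i
              have e2 := testBit_row S (w - 1) i
              rw [hrow] at e1
              have := e1.symm.trans e2
              simpa [hi] using this
            have hax : a u (w - 1) := by
              apply ha.twin u (w - 1) w (by omega) (by omega) hw _ haw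
              intro i hi
              have := hbits i (by omega)
              rw [hS _ _ (by omega) (by omega), hS _ _ (by omega) (by omega)] at this
              have d1 : Dec u w w i := by unfold Dec; omega
              have d2 : Dec u w (w - 1) i := by unfold Dec; omega
              constructor
              · intro h; exact ha.symm _ _ (this.2 ⟨ha.symm _ _ h, d2⟩).1
              · intro h; exact ha.symm _ _ (this.1 ⟨ha.symm _ _ h, d1⟩).1
            have := (hbits u (by omega)).2 ((hS _ _ (by omega) (by omega)).2
              ⟨ha.symm _ _ hax, by unfold Dec; omega⟩)
            have hd := ((hS _ _ (by omega) (by omega)).1 this).2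
            unfold Dec at hd
            omega
        rw [hadd, hall]; simp
      · have : go n f u (w + 1) S = false := by
          apply ih u (w + 1) _ hu (by omega) (by omega)
          intro i j hi hj
          rw [hS i j hi hj]
          unfold Dec
          constructor
          · rintro ⟨h, h'⟩; exact ⟨h, by omega⟩
          · rintro ⟨h, h'⟩
            refine ⟨h, ?_⟩
            by_contra hd
            have : (i = u ∧ j = w) ∨ (i = w ∧ j = u) := by omega
            rcases this with ⟨rfl, rfl⟩ | ⟨rfl, rfl⟩
            · exact haw h
            · exact haw (ha.symm _ _ h)
        rw [this]; simp
    all_goals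
      have hrow : ∀ j, a u j → j < w := by
        intro j hj
        by_contra hjw
        obtain ⟨x, y, z, hxy, hxz, hyz, hc⟩ := full_ne h1
        obtain ⟨x', y', z', hxy', hxz', hyz', hc'⟩ := ha.cubic u hu
        have key : ∀ j, j = x ∨ j = y ∨ j = z → (j = x' ∨ j = y' ∨ j = z') ∧ j < w := by
          intro j hj
          obtain ⟨hj12, hb⟩ := hc j hj
          obtain ⟨h, hd⟩ := (hS u j (by omega) hj12).1 hb
          refine ⟨(hc' j).1 h, ?_⟩
          unfold Dec at hd
          omega
        have k0 := (hc' j).1 hj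
        have k1 := key x (by simp)
        have k2 := key y (by simp)
        have k3 := key z (by simp)
        omega
      have hrow' : ∀ j, a j u → j < w := fun j hj => hrow j (ha.symm _ _ hj)
    · apply hleaf
      intro i j hi hj
      rw [hS i j hi hj]
      refine ⟨fun h => h.1, fun h => ⟨h, ?_⟩⟩
      have h5 := ha.lt _ _ h
      have h6 := hlt2 _ _ h
      have h7 : i ≠ j := by rintro rfl; exact ha.irrefl _ h
      unfold Dec
      omega
    · exfalso
      obtain ⟨i, j, hi, hj, hij⟩ := ha.conn (u + 1) (by omega) (by omega)
      have hjn := hlt2 _ _ hij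
      have hb : S.testBit (12 * j + i) = true := by
        rw [hS _ _ (by omega) (by omega)]
        refine ⟨ha.symm _ _ hij, ?_⟩
        unfold Dec
        by_cases hiu : i = u
        · subst hiu
          have := hrow _ hij
          omega
        · omega
      have hz : (S >>> (12 * (u + 1))).testBit (12 * (j - (u + 1)) + i) = true := by
        rw [Nat.testBit_shiftRight, ← hb]
        congr 1
        omega
      change S >>> (12 * (u + 1)) = 0 at h4
      rw [h4] at hz
      simp at hz
    · apply ih (u + 1) (u + 2) S (by omega) (by omega) (by omega)
      intro i j hi hj
      rw [hS i j hi hj]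
      unfold Dec
      constructor
      · rintro ⟨h, h'⟩; exact ⟨h, by omega⟩
      · rintro ⟨h, h'⟩
        refine ⟨h, ?_⟩
        have h7 : i ≠ j := by rintro rfl; exact ha.irrefl _ h
        by_cases hiu : i = u
        · subst hiu
          have := hrow _ h
          omega
        · by_cases hju : j = u
          · subst hju
            have := hrow' _ h
            omega
          · omega

end SoltesSearch

namespace SoltesSearch

/-! ### Counting and growing balls -/

theorem ones_testBit (m : ℕ) :
    (5445847423328601499764522166702896582657 : ℕ).testBit m = decide (m < 144 ∧ m % 12 = 0) := by
  by_cases h : m < 144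
  · have : ∀ m < 144, (5445847423328601499764522166702896582657 : ℕ).testBit m =
        decide (m < 144 ∧ m % 12 = 0) := by decide +kernel
    exact this m h
  · rw [Nat.testBit_lt_two_pow]
    · simp [h]
    · calc (5445847423328601499764522166702896582657 : ℕ) < 2 ^ 144 := by norm_num
        _ ≤ 2 ^ m := Nat.pow_le_pow_right (by norm_num) (by omega)

/-- Column `j` of a packed matrix. -/
def col (B j : ℕ) : ℕ := (B >>> j) &&& 5445847423328601499764522166702896582657

theorem col_testBit (B j m : ℕ) :
    (col B j).testBit m = true ↔ (m < 144 ∧ m % 12 = 0) ∧ B.testBit (j + m) = true := by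
  unfold col
  rw [Nat.testBit_and, ones_testBit, Nat.testBit_shiftRight]
  simp [and_comm]

theorem col_lt (B j : ℕ) : col B j < 2 ^ (12 * 12) := by
  unfold col
  exact lt_of_le_of_lt Nat.and_le_right (by norm_num)

theorem sparse_mod {c : ℕ} (hc : ∀ m, c.testBit m = true → m % 12 = 0) :
    c % 2 ^ 12 = (c.testBit 0).toNat := by
  apply Nat.eq_of_testBit_eq
  intro i
  rw [Nat.testBit_mod_two_pow]
  cases i with
  | zero => cases h : c.testBit 0 <;> simp
  | succ i =>
    have h1 : ((c.testBit 0).toNat).testBit (i + 1) = false := by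
      cases c.testBit 0 <;> simp [Nat.testBit_succ]
    rw [h1]
    by_cases hi : i + 1 < 12
    · have : ¬ c.testBit (i + 1) = true := fun h => by have := hc _ h; omega
      simp at this
      simp [this]
    · simp [hi]

theorem sparse_mul {b : ℕ} (hb : b < 2 ^ 12) {j : ℕ} (hj : j < 12) :
    ∀ (i c : ℕ), (∀ m, c.testBit m = true → m % 12 = 0) →
      (c * b).testBit (12 * i + j) = (c.testBit (12 * i) && b.testBit j) := by
  intro i
  induction i with
  | zero =>
    intro c hc
    have h1 := sparse_mod hc
    have h2 : c * b = 2 ^ 12 * (c / 2 ^ 12 * b) + (c.testBit 0).toNat * b := by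
      conv_lhs => rw [← Nat.div_add_mod c (2 ^ 12), h1]
      ring
    have h3 : (c.testBit 0).toNat * b < 2 ^ 12 := by
      cases c.testBit 0 <;> simp <;> omega
    rw [h2, Nat.testBit_two_pow_mul_add _ h3]
    simp only [Nat.mul_zero, Nat.zero_add, hj, if_true]
    cases c.testBit 0 <;> simp
  | succ i ih =>
    intro c hc
    have h1 := sparse_mod hc
    have h2 : c * b = 2 ^ 12 * (c / 2 ^ 12 * b) + (c.testBit 0).toNat * b := by
      conv_lhs => rw [← Nat.div_add_mod c (2 ^ 12), h1]
      ring
    have h3 : (c.testBit 0).toNat * b < 2 ^ 12 := by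
      cases c.testBit 0 <;> simp <;> omega
    rw [h2, Nat.testBit_two_pow_mul_add _ h3, if_neg (by omega),
      show 12 * (i + 1) + j - 12 = 12 * i + j by omega, ih]
    · rw [Nat.testBit_div_two_pow]
      congr 2
    · intro m hm
      rw [Nat.testBit_div_two_pow] at hm
      have := hc _ hm
      omega

theorem sparse_count : ∀ (m c : ℕ), (∀ k, c.testBit k = true → k % 12 = 0) → c < 2 ^ (12 * m) →
    c ≡ ∑ i ∈ Finset.range m, (c.testBit (12 * i)).toNat [MOD 4095] := by
  intro m
  induction m with
  | zero =>
    intro c _ hlt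
    have : c = 0 := by simpa using hlt
    subst this
    rfl
  | succ m ih =>
    intro c hc hlt
    have h1 := sparse_mod hc
    rw [Finset.sum_range_succ']
    have h2 : c = 2 ^ 12 * (c / 2 ^ 12) + (c.testBit 0).toNat := by
      rw [← h1]; exact (Nat.div_add_mod c (2 ^ 12)).symm
    have h3 := ih (c / 2 ^ 12) (by
      intro k hk
      rw [Nat.testBit_div_two_pow] at hk
      have := hc _ hk
      omega) (by
      rw [Nat.div_lt_iff_lt_mul (by positivity), ← pow_add]
      exact hlt)
    have h4 : ∀ i, (c / 2 ^ 12).testBit (12 * i) = c.testBit (12 * (i + 1)) := by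
      intro i
      rw [Nat.testBit_div_two_pow]
      congr 1
    simp only [h4] at h3
    calc c = 2 ^ 12 * (c / 2 ^ 12) + (c.testBit 0).toNat := h2
      _ ≡ 1 * (c / 2 ^ 12) + (c.testBit 0).toNat [MOD 4095] :=
        Nat.ModEq.add_right _ (Nat.ModEq.mul_right _ (by decide))
      _ = c / 2 ^ 12 + (c.testBit 0).toNat := by rw [one_mul]
      _ ≡ _ [MOD 4095] := Nat.ModEq.add_right _ h3

theorem count_eq (B : ℕ) : count B =
    ∑ j ∈ Finset.range 12, ∑ i ∈ Finset.range 12, (B.testBit (12 * i + j)).toNat := by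
  have h0 : count B = (∑ j ∈ Finset.range 12, col B j) % 4095 := by
    simp only [Finset.sum_range_succ, Finset.sum_range_zero]
    rfl
  have h1 : ∀ j, col B j ≡ ∑ i ∈ Finset.range 12, (B.testBit (12 * i + j)).toNat [MOD 4095] := by
    intro j
    refine (sparse_count 12 (col B j) ?_ (col_lt B j)).trans ?_
    · intro k hk; exact ((col_testBit _ _ _).1 hk).1.2
    · refine congrArg (· % 4095) ?_
      apply Finset.sum_congr rfl
      intro i hi
      rw [Finset.mem_range] at hi
      congr 1
      rw [Bool.eq_iff_iff, col_testBit, Nat.add_comm j]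
      constructor
      · exact fun h => h.2
      · exact fun h => ⟨by omega, h⟩
  have h2 : (∑ j ∈ Finset.range 12, col B j) ≡
      ∑ j ∈ Finset.range 12, ∑ i ∈ Finset.range 12, (B.testBit (12 * i + j)).toNat [MOD 4095] := by
    have : ∀ s : Finset ℕ, (∑ j ∈ s, col B j) ≡
      ∑ j ∈ s, ∑ i ∈ Finset.range 12, (B.testBit (12 * i + j)).toNat [MOD 4095] := by
      intro s
      induction s using Finset.induction_on with
      | empty => rfl
      | insert a s ha ih =>
        rw [Finset.sum_insert ha, Finset.sum_insert ha]
        exact (h1 a).add ih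
    exact this _
  rw [h0, h2]
  apply Nat.mod_eq_of_lt
  have h3 : ∑ j ∈ Finset.range 12, ∑ i ∈ Finset.range 12, (B.testBit (12 * i + j)).toNat ≤
      ∑ j ∈ Finset.range 12, ∑ i ∈ Finset.range 12, 1 :=
    Finset.sum_le_sum fun j _ => Finset.sum_le_sum fun i _ => Bool.toNat_le _
  simp at h3
  omega

theorem foldl_testBit (t : ℕ → ℕ) (p : ℕ) : ∀ (l : List ℕ) (B : ℕ),
    (l.foldl (fun acc k => acc ||| t k) B).testBit p = true ↔
      B.testBit p = true ∨ ∃ k ∈ l, (t k).testBit p = true := by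
  intro l
  induction l with
  | nil => simp
  | cons x l ih =>
    intro B
    rw [List.foldl_cons, ih, Nat.testBit_or]
    simp [or_assoc]

theorem grow_testBit (A B : ℕ) {i j : ℕ} (hi : i < 12) (hj : j < 12) :
    (grow A B).testBit (12 * i + j) = true ↔ B.testBit (12 * i + j) = true ∨
      ∃ k, k < 12 ∧ A.testBit (12 * i + k) = true ∧ B.testBit (12 * k + j) = true := by
  have h0 : grow A B = (List.range 12).foldl (fun acc k => acc ||| (col A k *
      Nat.land (Nat.shiftRight B (Nat.mul 12 k)) 4095)) B := by
    rfl
  rw [h0, foldl_testBit]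
  simp only [List.mem_range]
  refine or_congr Iff.rfl (exists_congr fun k => and_congr_right fun hk => ?_)
  rw [sparse_mul _ hj]
  · rw [Bool.and_eq_true, col_testBit, testBit_row, Nat.add_comm k]
    constructor
    · rintro ⟨⟨_, h⟩, _, h'⟩; exact ⟨h, h'⟩
    · rintro ⟨h, h'⟩; exact ⟨⟨by omega, h⟩, hj, h'⟩
  · intro m hm; exact ((col_testBit _ _ _).1 hm).1.2
  · exact lt_of_le_of_lt Nat.and_le_right (by norm_num)

theorem value_zero (A N B : ℕ) : value A N 0 B = 0 := rfl

theorem value_succ (A N f B : ℕ) : value A N (f + 1) B =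
    if N - count B = 0 then 0 else (N - count B) + value A N f (grow A B) := by
  have : value A N (f + 1) B = Nat.rec (motive := fun _ => ℕ) 0
      (fun c _ => Nat.succ c + value A N f (grow A B)) (N - count B) := rfl
  rw [this]
  cases N - count B <;> simp

/-! ### Distances -/

theorem dist_step {W : Type*} (K : SimpleGraph W) (hK : K.Connected) (p q : W) (k : ℕ) :
    K.dist p q ≤ k + 1 ↔ K.dist p q ≤ k ∨ ∃ r, K.Adj p r ∧ K.dist r q ≤ k := by
  constructor
  · intro h
    obtain ⟨P, hP⟩ := hK.exists_walk_length_eq_dist p q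
    cases P with
    | nil => left; simp
    | cons hadj P' =>
      right
      refine ⟨_, hadj, ?_⟩
      have := SimpleGraph.dist_le P'
      rw [SimpleGraph.Walk.length_cons] at hP
      omega
  · rintro (h | ⟨r, hr, h⟩)
    · omega
    · have h1 := hK.dist_triangle (u := p) (v := r) (w := q)
      have h2 : K.dist p r = 1 := SimpleGraph.dist_eq_one_iff_adj.2 hr
      omega

theorem dist_lt_card {W : Type*} [Fintype W] (K : SimpleGraph W)
    (hK : K.Connected) (p q : W) : K.dist p q < Fintype.card W := by
  obtain ⟨P, hP, hl⟩ := hK.exists_path_of_dist p q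
  rw [← hl]
  exact hP.length_lt

/-- Number of ordered pairs at distance more than `k`. -/
noncomputable def far {W : Type*} [Fintype W] (K : SimpleGraph W)
    (k : ℕ) : ℕ := ∑ p : W, ∑ q : W, if K.dist p q ≤ k then 0 else 1

theorem sum_far {W : Type*} [Fintype W] (K : SimpleGraph W)
    (hK : K.Connected) {m : ℕ} (hm : Fintype.card W ≤ m + 1) :
    ∑ k ∈ Finset.range m, far K k = ∑ p : W, ∑ q : W, K.dist p q := by
  unfold far
  rw [Finset.sum_comm]
  refine Finset.sum_congr rfl fun p _ => ?_
  rw [Finset.sum_comm]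
  refine Finset.sum_congr rfl fun q _ => ?_
  have h := dist_lt_card K hK p q
  generalize K.dist p q = d at h
  have h1 : ∀ k, (if d ≤ k then 0 else 1) = if k ∈ Finset.range d then 1 else 0 := by
    intro k
    simp only [Finset.mem_range]
    split_ifs <;> omega
  simp only [h1]
  rw [Finset.sum_ite_mem, Finset.inter_eq_right.2]
  · simp
  · intro x; simp only [Finset.mem_range]; omega

theorem far_zero {W : Type*} [Fintype W] (K : SimpleGraph W)
    {k t : ℕ} (hkt : k ≤ t) (h : far K k = 0) : far K t = 0 := by
  unfold far at *
  simp only [Finset.sum_eq_zero_iff, Finset.mem_univ, true_imp_iff] at *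
  intro p q
  have := h p q
  by_cases h' : K.dist p q ≤ k
  · rw [if_pos (h'.trans hkt)]
  · simp [h'] at this

theorem count_ball {W : Type*} [Fintype W] (K : SimpleGraph W)
    (e : W → ℕ) (he : Function.Injective e) (he12 : ∀ p, e p < 12) {k B : ℕ}
    (hB : ∀ i j, i < 12 → j < 12 → (B.testBit (12 * i + j) = true ↔
      ∃ p q, e p = i ∧ e q = j ∧ K.dist p q ≤ k)) :
    Fintype.card W * Fintype.card W - count B = far K k := by
  classical
  have h1 : count B = ∑ p : W, ∑ q : W, if K.dist p q ≤ k then 1 else 0 := by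
    rw [count_eq, Finset.sum_comm, ← Finset.sum_product', ← Finset.sum_product']
    have e1 : ∀ x ∈ Finset.range 12 ×ˢ Finset.range 12,
        (B.testBit (12 * x.1 + x.2)).toNat =
          if B.testBit (12 * x.1 + x.2) = true then 1 else 0 := by
      intro x _
      cases B.testBit (12 * x.1 + x.2) <;> simp
    rw [Finset.sum_congr rfl e1, ← Finset.card_filter, ← Finset.card_filter]
    symm
    refine Finset.card_bij (fun x _ => (e x.1, e x.2)) ?_ ?_ ?_
    · intro x hx
      simp only [Finset.mem_filter, Finset.mem_product, Finset.mem_range] at hx ⊢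
      exact ⟨⟨he12 _, he12 _⟩, (hB _ _ (he12 _) (he12 _)).2 ⟨_, _, rfl, rfl, hx.2⟩⟩
    · intro x _ y _ hxy
      simp only [Prod.mk.injEq] at hxy
      exact Prod.ext (he hxy.1) (he hxy.2)
    · intro x hx
      simp only [Finset.mem_filter, Finset.mem_product, Finset.mem_range] at hx
      obtain ⟨p, q, hp, hq, hd⟩ := (hB _ _ hx.1.1 hx.1.2).1 hx.2
      refine ⟨(p, q), ?_, ?_⟩
      · simpa using hd
      · simp [hp, hq]
  have h2 : count B + far K k = Fintype.card W * Fintype.card W := by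
    rw [h1]
    unfold far
    rw [← Finset.sum_add_distrib]
    simp only [← Finset.sum_add_distrib]
    have : ∀ p q, ((if K.dist p q ≤ k then 1 else 0) + if K.dist p q ≤ k then 0 else 1) = 1 := by
      intro p q; split_ifs <;> rfl
    simp [this]
  omega

theorem value_ball {W : Type*} [Fintype W] (K : SimpleGraph W)
    (e : W → ℕ) (he : Function.Injective e) (he12 : ∀ p, e p < 12) (hK : K.Connected) {A : ℕ}
    (hA : ∀ i j, i < 12 → j < 12 → (A.testBit (12 * i + j) = true ↔
      ∃ p q, e p = i ∧ e q = j ∧ K.Adj p q)) :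
    ∀ f k B, (∀ i j, i < 12 → j < 12 → (B.testBit (12 * i + j) = true ↔
      ∃ p q, e p = i ∧ e q = j ∧ K.dist p q ≤ k)) →
    value A (Fintype.card W * Fintype.card W) f B = ∑ t ∈ Finset.range f, far K (k + t) := by
  intro f
  induction f with
  | zero => intros; rfl
  | succ f ih =>
    intro k B hB
    rw [value_succ, count_ball K e he he12 hB]
    split_ifs with h0
    · symm
      apply Finset.sum_eq_zero
      intro t _
      exact far_zero K (by omega) h0
    · rw [Finset.sum_range_succ', ih (k + 1), Nat.add_comm]
      · congr 1
        apply Finset.sum_congr rfl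
        intro t _
        congr 1
        omega
      · intro i j hi hj
        rw [grow_testBit A B hi hj, hB i j hi hj]
        constructor
        · rintro (⟨p, q, hp, hq, hd⟩ | ⟨m, hm, h1, h2⟩)
          · exact ⟨p, q, hp, hq, by omega⟩
          · obtain ⟨p, r, hp, hr, hadj⟩ := (hA i m hi hm).1 h1
            obtain ⟨r', q, hr', hq, hd⟩ := (hB m j hm hj).1 h2
            have : r' = r := he (hr'.trans hr.symm)
            subst this
            exact ⟨p, q, hp, hq, (dist_step K hK p q k).2 (Or.inr ⟨_, hadj, hd⟩)⟩
        · rintro ⟨p, q, hp, hq, hd⟩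
          rcases (dist_step K hK p q k).1 hd with h | ⟨r, hadj, h⟩
          · exact Or.inl ⟨p, q, hp, hq, h⟩
          · right
            exact ⟨e r, he12 r, (hA _ _ hi (he12 r)).2 ⟨p, r, hp, rfl, hadj⟩,
              (hB _ _ (he12 r) hj).2 ⟨r, q, rfl, hq, h⟩⟩

theorem value_wiener {W : Type*} [Fintype W] (K : SimpleGraph W)
    (e : W → ℕ) (he : Function.Injective e) (he12 : ∀ p, e p < 12) (hK : K.Connected) (hcard : Fintype.card W ≤ 12) {A D : ℕ}
    (hA : ∀ i j, i < 12 → j < 12 → (A.testBit (12 * i + j) = true ↔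
      ∃ p q, e p = i ∧ e q = j ∧ K.Adj p q))
    (hD : ∀ i j, i < 12 → j < 12 → (D.testBit (12 * i + j) = true ↔ i = j ∧ ∃ p, e p = i)) :
    value A (Fintype.card W * Fintype.card W) 11 D = ∑ p : W, ∑ q : W, K.dist p q := by
  rw [value_ball K e he he12 hK hA 11 0 D, ← sum_far K hK (m := 11) (by omega)]
  · simp
  · intro i j hi hj
    rw [hD i j hi hj]
    constructor
    · rintro ⟨rfl, p, hp⟩
      exact ⟨p, p, hp, hp, by simp⟩
    · rintro ⟨p, q, hp, hq, hd⟩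
      have : p = q := by
        rw [← hK.dist_eq_zero_iff]; omega
      subst this
      exact ⟨hp.symm.trans hq, p, hp⟩

theorem diag_testBit (lo : ℕ) {i j : ℕ} (hi : i < 12) (hj : j < 12) : ∀ d,
    (diag lo d).testBit (12 * i + j) = true ↔ i = j ∧ lo ≤ i ∧ i < lo + d := by
  intro d
  induction d with
  | zero =>
    change (0 : ℕ).testBit _ = true ↔ _
    simp only [Nat.zero_testBit, Bool.false_eq_true, false_iff]
    omega
  | succ d ih =>
    change (diag lo d ||| 1 <<< (13 * (lo + d))).testBit (12 * i + j) = true ↔ _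
    rw [Nat.testBit_or, Bool.or_eq_true, ih, Nat.one_shiftLeft, Nat.testBit_two_pow,
      decide_eq_true_eq]
    omega

theorem mask_testBit : ∀ i < 12, ∀ j < 12,
    (22295299351107294540035953750481658609393664 : ℕ).testBit (12 * i + j) =
      decide (1 ≤ i ∧ 1 ≤ j) := by
  decide +kernel

end SoltesSearch

namespace SoltesSearch

/-! ### The labelled counterexample -/

/-- Adjacency relation of `G` on labels. -/
def Rel {V : Type*} {n : ℕ} (G : SimpleGraph V) (e : V ≃ Fin n) (i j : ℕ) : Prop :=
  ∃ p q, (e p).val = i ∧ (e q).val = j ∧ G.Adj p q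

/-- The adjacency matrix as a word, to be compared lexicographically. -/
noncomputable def word {V : Type*} {n : ℕ} (G : SimpleGraph V) (e : V ≃ Fin n) :
    Lex (Fin 144 → Bool) :=
  open Classical in toLex fun k => decide (Rel G e (k.val / 12) (k.val % 12))

theorem exists_max {V : Type*} [Fintype V] {n : ℕ} (hcard : Fintype.card V = n)
    (G : SimpleGraph V) (v : V) : ∃ e : V ≃ Fin n, (e v).val = 0 ∧
      ∀ e' : V ≃ Fin n, (e' v).val = 0 → word G e' ≤ word G e := by
  classical
  have hn : 0 < n := hcard ▸ Fintype.card_pos_iff.2 ⟨v⟩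
  let e1 : V ≃ Fin n := Fintype.equivFinOfCardEq hcard
  have hfin : {e : V ≃ Fin n | (e v).val = 0}.Finite := Set.toFinite _
  obtain ⟨e, he, hmax⟩ := Set.exists_max_image _ (word G) hfin
    ⟨e1.trans (Equiv.swap (e1 v) ⟨0, hn⟩), by simp⟩
  exact ⟨e, he, hmax⟩

theorem rel_swap {V : Type*} {n : ℕ} (G : SimpleGraph V) (e : V ≃ Fin n) {x w : ℕ}
    (hx : x < n) (hw : w < n) (i j : ℕ) :
    Rel G (e.trans (Equiv.swap ⟨x, hx⟩ ⟨w, hw⟩)) i j ↔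
      Rel G e (Equiv.swap x w i) (Equiv.swap x w j) := by
  have key : ∀ (a : Fin n) (i : ℕ), (Equiv.swap (⟨x, hx⟩ : Fin n) ⟨w, hw⟩ a).val = i ↔
      a.val = Equiv.swap x w i := by
    intro a i
    rw [Equiv.swap_apply_def, Equiv.swap_apply_def]
    simp only [Fin.ext_iff]
    split_ifs <;> simp_all <;> omega
  unfold Rel
  simp only [Equiv.trans_apply, key]

theorem max_twin {V : Type*} {n : ℕ} (hn : n ≤ 12) (G : SimpleGraph V) (v : V) (e : V ≃ Fin n)
    (he : (e v).val = 0) (hmax : ∀ e' : V ≃ Fin n, (e' v).val = 0 → word G e' ≤ word G e)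
    (u x w : ℕ) (hux : u < x) (hxw : x < w) (hw : w < n)
    (h : ∀ i, i < u → (Rel G e i x ↔ Rel G e i w)) (huw : Rel G e u w) : Rel G e u x := by
  classical
  by_contra hcon
  have hx : x < n := hxw.trans hw
  have h0 := hmax (e.trans (Equiv.swap ⟨x, hx⟩ ⟨w, hw⟩)) (by
    rw [Equiv.trans_apply, Equiv.swap_apply_of_ne_of_ne, he]
    · intro h'; rw [h'] at he; simp at he; omega
    · intro h'; rw [h'] at he; simp at he; omega)
  refine absurd h0 (not_le_of_gt ?_)
  refine ⟨⟨12 * u + x, by omega⟩, ?_, ?_⟩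
  · rintro ⟨m, hm⟩ hlt
    rw [Fin.mk_lt_mk] at hlt
    change decide (Rel G e (m / 12) (m % 12)) =
      decide (Rel G (e.trans (Equiv.swap ⟨x, hx⟩ ⟨w, hw⟩)) (m / 12) (m % 12))
    rw [decide_eq_decide, rel_swap]
    have hi : Equiv.swap x w (m / 12) = m / 12 :=
      Equiv.swap_apply_of_ne_of_ne (by omega) (by omega)
    rw [hi]
    by_cases hmu : m / 12 < u
    · have := h _ hmu
      rw [Equiv.swap_apply_def]
      split_ifs with h1 h2
      · rw [h1]; exact this
      · rw [h2]; exact this.symm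
      · rfl
    · rw [Equiv.swap_apply_of_ne_of_ne (by omega) (by omega)]
  · change decide (Rel G e ((12 * u + x) / 12) ((12 * u + x) % 12)) <
      decide (Rel G (e.trans (Equiv.swap ⟨x, hx⟩ ⟨w, hw⟩)) ((12 * u + x) / 12)
        ((12 * u + x) % 12))
    rw [show (12 * u + x) / 12 = u by omega, show (12 * u + x) % 12 = x by omega,
      decide_eq_false hcon, decide_eq_true]
    · decide
    · rw [rel_swap, Equiv.swap_apply_left,
        Equiv.swap_apply_of_ne_of_ne (by omega) (by omega)]
      exact huw

theorem good_of_max {V : Type*} {n : ℕ} (hn : n ≤ 12) (G : SimpleGraph V)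
    (hconn : G.Connected) (hcubic : ∀ v : V, (G.neighborSet v).ncard = 3)
    (v : V) (e : V ≃ Fin n)
    (he : (e v).val = 0) (hmax : ∀ e' : V ≃ Fin n, (e' v).val = 0 → word G e' ≤ word G e) :
    Good n (Rel G e) where
  symm := by
    rintro i j ⟨p, q, hp, hq, h⟩
    exact ⟨q, p, hq, hp, h.symm⟩
  irrefl := by
    rintro i ⟨p, q, hp, hq, h⟩
    have : p = q := e.injective (Fin.ext (hp.trans hq.symm))
    subst this
    exact G.loopless.irrefl _ h
  lt := by
    rintro i j ⟨p, q, hp, hq, h⟩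
    rw [← hp]; exact (e p).isLt
  cubic := by
    intro u hu
    obtain ⟨x, y, z, hxy, hxz, hyz, hs⟩ := Set.ncard_eq_three.1 (hcubic (e.symm ⟨u, hu⟩))
    have hinj : ∀ p q, (e p).val = (e q).val → p = q := fun p q h => e.injective (Fin.ext h)
    refine ⟨(e x).val, (e y).val, (e z).val, fun h => hxy (hinj _ _ h),
      fun h => hxz (hinj _ _ h), fun h => hyz (hinj _ _ h), fun j => ?_⟩
    have hmem : ∀ q, G.Adj (e.symm ⟨u, hu⟩) q ↔ q = x ∨ q = y ∨ q = z := by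
      intro q
      rw [← SimpleGraph.mem_neighborSet, hs]
      simp
    constructor
    · rintro ⟨p, q, hp, hq, h⟩
      have : p = e.symm ⟨u, hu⟩ := by
        rw [Equiv.eq_symm_apply]; exact Fin.ext hp
      subst this
      rcases (hmem q).1 h with rfl | rfl | rfl
      · exact Or.inl hq.symm
      · exact Or.inr (Or.inl hq.symm)
      · exact Or.inr (Or.inr hq.symm)
    · rintro (rfl | rfl | rfl)
      · exact ⟨_, x, by simp, rfl, (hmem x).2 (by simp)⟩
      · exact ⟨_, y, by simp, rfl, (hmem y).2 (by simp)⟩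
      · exact ⟨_, z, by simp, rfl, (hmem z).2 (by simp)⟩
  conn := by
    intro u hu hun
    obtain ⟨P⟩ := hconn.preconnected v (e.symm ⟨u, hun⟩)
    obtain ⟨d, -, h1, h2⟩ := P.exists_boundary_dart {p | (e p).val < u}
      (by simp [he, hu]) (by simp)
    exact ⟨_, _, h1, not_lt.1 h2, d.fst, d.snd, rfl, rfl, d.adj⟩
  twin := max_twin hn G v e he hmax

theorem card_ne {V : Type*} [Fintype V] (v : V) :
    Fintype.card {u : V // u ≠ v} = Fintype.card V - 1 := by
  classical
  have h := Fintype.card_subtype_compl (fun u : V => u = v)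
  rw [Fintype.card_subtype_eq, ← Nat.card_eq_fintype_card] at h
  rw [← Nat.card_eq_fintype_card]
  exact h

theorem leaf_false {V : Type*} [Fintype V] {n : ℕ} (hcard : Fintype.card V = n) (hn : n ≤ 12)
    (G : SimpleGraph V) (hconn : G.Connected) (v : V) (e : V ≃ Fin n) (he : (e v).val = 0)
    (hS : IsSoltes G v) (S : ℕ)
    (h : ∀ i j, i < 12 → j < 12 → (S.testBit (12 * i + j) = true ↔ Rel G e i j)) :
    leaf n S = false := by
  have hlt : ∀ p, (e p).val < 12 := fun p => lt_of_lt_of_le (e p).isLt hn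
  have h1 := value_wiener G (fun p => (e p).val)
    (fun p q hpq => e.injective (Fin.ext hpq)) hlt hconn (hcard ▸ hn) (A := S) (D := diag 0 n) h (by
      intro i j hi hj
      rw [diag_testBit 0 hi hj]
      refine and_congr_right fun _ => ⟨fun hin => ⟨e.symm ⟨i, by omega⟩, by simp⟩, ?_⟩
      rintro ⟨p, rfl⟩
      have := (e p).isLt
      omega)
  have hpos : ∀ p : V, p ≠ v → 1 ≤ (e p).val := by
    intro p hp
    by_contra hc
    exact hp (e.injective (Fin.ext (by omega)))
  have h2 := value_wiener (deleteVertex G v) (fun p => (e p.1).val)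
    (fun p q hpq => Subtype.ext (e.injective (Fin.ext hpq))) (fun p => hlt p.1) hS.1
    (by rw [card_ne]; omega)
    (A := Nat.land S 22295299351107294540035953750481658609393664) (D := diag 1 (n - 1)) (by
      intro i j hi hj
      change (S &&& 22295299351107294540035953750481658609393664).testBit (12 * i + j) = true ↔ _
      rw [Nat.testBit_and, mask_testBit i hi j hj, Bool.and_eq_true, h i j hi hj,
        decide_eq_true_eq]
      constructor
      · rintro ⟨⟨p, q, hp, hq, hadj⟩, hi1, hj1⟩
        refine ⟨⟨p, ?_⟩, ⟨q, ?_⟩, hp, hq, hadj⟩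
        · rintro rfl; omega
        · rintro rfl; omega
      · rintro ⟨⟨p, hp'⟩, ⟨q, hq'⟩, rfl, rfl, hadj⟩
        exact ⟨⟨p, q, rfl, rfl, hadj⟩, hpos p hp', hpos q hq'⟩) (by
      intro i j hi hj
      rw [diag_testBit 1 hi hj]
      refine and_congr_right fun _ => ⟨fun hin => ⟨⟨e.symm ⟨i, by omega⟩, ?_⟩, by simp⟩, ?_⟩
      · intro h'
        rw [← h'] at he
        simp at he
        omega
      · rintro ⟨⟨p, hp⟩, rfl⟩
        have := (e p).isLt
        have := hpos p hp
        simp only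
        omega)
  rw [card_ne, hcard] at h2
  rw [hcard] at h1
  have h3 : leaf n S = !(Nat.beq (value S (n * n) 11 (diag 0 n) / 2)
    (value (Nat.land S 22295299351107294540035953750481658609393664)
      ((n - 1) * (n - 1)) 11 (diag 1 (n - 1)) / 2)) := rfl
  rw [h3, h1, h2]
  have h4 := hS.2
  unfold wiener at h4
  rw [h4]
  simp

set_option maxRecDepth 100000 in
theorem go_2 : go 2 200 0 1 0 = true := by decide +kernel

set_option maxRecDepth 100000 in
theorem go_4 : go 4 200 0 1 0 = true := by decide +kernel

set_option maxRecDepth 100000 in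
theorem go_6 : go 6 200 0 1 0 = true := by decide +kernel

set_option maxRecDepth 100000 in
theorem go_8 : go 8 200 0 1 0 = true := by decide +kernel

set_option maxRecDepth 100000 in
theorem go_10 : go 10 200 0 1 0 = true := by decide +kernel

set_option maxRecDepth 100000 in
theorem go_12 : go 12 200 0 1 0 = true := by decide +kernel

theorem card_even {V : Type*} [Fintype V] (G : SimpleGraph V)
    (hcubic : ∀ v : V, (G.neighborSet v).ncard = 3) : Fintype.card V % 2 = 0 := by
  classical
  have h := G.sum_degrees_eq_twice_card_edges
  have h1 : ∀ v, G.degree v = 3 := by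
    intro v
    rw [← hcubic v, ← SimpleGraph.card_neighborSet_eq_degree, Set.ncard_eq_toFinset_card',
      Set.toFinset_card]
  simp only [h1] at h
  simp at h
  omega

end SoltesSearch

/-- No connected cubic graph on at most 12 vertices has a Šoltés
vertex: for every vertex `v`, either `G − v` is disconnected or `W(G − v) ≠ W(G)`. -/
theorem no_soltes_vertex_in_small_cubic_graphs {V : Type*} [Fintype V]
    (G : SimpleGraph V) (hcard : Fintype.card V ≤ 12) (hconn : G.Connected)
    (hcubic : ∀ v : V, (G.neighborSet v).ncard = 3) :
    ∀ v : V, ¬ IsSoltes G v := by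
  intro v hS
  obtain ⟨n, hn⟩ : ∃ n, Fintype.card V = n := ⟨_, rfl⟩
  have heven := SoltesSearch.card_even G hcubic
  have hpos : 0 < Fintype.card V := Fintype.card_pos_iff.2 ⟨v⟩
  rw [hn] at hcard heven hpos
  obtain ⟨e, he, hmax⟩ := SoltesSearch.exists_max hn G v
  have hgood := SoltesSearch.good_of_max hcard G hconn hcubic v e he hmax
  have hgo := SoltesSearch.go_sound hcard hgood
    (fun S hbits => SoltesSearch.leaf_false hn hcard G hconn v e he hS S hbits)
    200 0 1 0 hpos (by omega) (by omega) (by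
      intro i j _ _
      simp only [Nat.zero_testBit, Bool.false_eq_true, false_iff]
      rintro ⟨h, hd⟩
      have hij : i ≠ j := by rintro rfl; exact hgood.irrefl _ h
      unfold SoltesSearch.Dec at hd
      omega)
  have hcases : n = 2 ∨ n = 4 ∨ n = 6 ∨ n = 8 ∨ n = 10 ∨ n = 12 := by omega
  have htrue : SoltesSearch.go n 200 0 1 0 = true := by
    rcases hcases with h | h | h | h | h | h <;> rw [h]
    · exact SoltesSearch.go_2
    · exact SoltesSearch.go_4
    · exact SoltesSearch.go_6
    · exact SoltesSearch.go_8
    · exact SoltesSearch.go_10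
    · exact SoltesSearch.go_12
  rw [htrue] at hgo
  exact Bool.noConfusion hgo
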